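/- arXiv:1103.0875 — 2 statements merged into one kernel-verified Lean document; each statement's English description precedes it below -/
import Mathlib

section
/- (Corollary 1, gap bounds.) Let C, D, m_h be positive integers with D ≥ 2, C ≥ 2D and m_h > D. Then the following inequalities of real numbers hold: (i) m_v^S(C,D,m_h) − m_v^N(C,D,m_h) < D + 1 + 2·m_h / ((C/D)·(C/(D − 1/2) − 2)); (ii) m_v^U(C,D,m_h) − m_v^C(C,D,m_h) < D + 1 + m_h / ((C/D − 1)·((C − 1)/(D − 1) − 2)); (iii) m_v^C(C,D,m_h) − m_v^L(C,D,m_h) < D + 1 + m_h / ((C/D)·(C/D − 1)). -/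
open Finset

noncomputable section

/-- The `p`-th polyphase length `⌈(m - p)/D⌉`. -/
def polyLen (D m p : ℕ) : ℤ := ⌈((m : ℚ) - (p : ℚ)) / (D : ℚ)⌉

/-- The sufficient-length condition. -/
def SuffLenCond (C D mh mv : ℕ) : Prop :=
  1 ≤ mv / D ∧
    ∑ p ∈ Finset.range D, ⌈((polyLen D mh p : ℚ) - 1) / ((mv / D : ℕ) : ℚ)⌉
      ≤ (C : ℤ) - (D : ℤ)

/-- The necessary-length condition. -/
def NecLenCond (C D mh mv : ℕ) : Prop :=
  1 ≤ mv / D ∧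
    ∑ p ∈ Finset.range D, ⌊((polyLen D mh p : ℚ) - 1) / ((mv / D : ℕ) : ℚ)⌋
      ≤ (C : ℤ) - (D : ℤ)

/-- The sufficient length `m_v^S(C,D,m_h)`. -/
def mvS (C D mh : ℕ) : ℕ := sInf {mv : ℕ | SuffLenCond C D mh mv}

/-- The necessary length `m_v^N(C,D,m_h)`. -/
def mvN (C D mh : ℕ) : ℕ := sInf {mv : ℕ | NecLenCond C D mh mv}

/-- The counting length `m_v^C(C,D,m_h) = D·⌈(m_h - D)/(C - D)⌉`. -/
def mvC (C D mh : ℕ) : ℤ := (D : ℤ) * ⌈((mh : ℚ) - (D : ℚ)) / ((C : ℚ) - (D : ℚ))⌉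

/-- The closed-form lower bound `m_v^L(C,D,m_h) = ⌈D·(m_h - D)/C⌉`. -/
def mvL (C D mh : ℕ) : ℤ := ⌈(D : ℚ) * ((mh : ℚ) - (D : ℚ)) / (C : ℚ)⌉

/-- The closed-form upper bound `m_v^U(C,D,m_h) = D + ⌈D·(m_h - D)/(C + 1 - 2D)⌉`. -/
def mvU (C D mh : ℕ) : ℤ :=
  (D : ℤ) + ⌈(D : ℚ) * ((mh : ℚ) - (D : ℚ)) / ((C : ℚ) + 1 - 2 * (D : ℚ))⌉

/-! By Hermite's identity the polyphase lengths sum to `m_h`, so with `k = ⌊m_v / D⌋` the terms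
`(m_{h;p} - 1) / k` sum to `(m_h - D) / k`. Rounding changes each of the `D` terms by less than `1`,
which places both lengths between the closed forms: `m_v^L ≤ m_v^N` and `m_v^S ≤ m_v^U`.
Up to rounding, the closed forms are `D (m_h - D) / x` with `x = C`, `C - D` or `C + 1 - 2D`, and
two such values with denominators `y ≤ x` differ by at most `D m_h (1 / y - 1 / x)`. -/

lemma sum_ceil_sub_div {K : Type*} [Field K] [LinearOrder K] [IsStrictOrderedRing K] [FloorRing K]
    {D : ℕ} (hD : 0 < D) (x : K) : ∑ p ∈ range D, ⌈(x - p) / D⌉ = ⌈x⌉ := by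
  have hD' : (0 : K) < D := by exact_mod_cast hD
  have telescope (y : K) :
      ∑ p ∈ range D, ⌈(y + 1 - p) / D⌉ = ∑ p ∈ range D, ⌈(y - p) / D⌉ + 1 := by
    have h := sum_range_sub' (fun p : ℕ => ⌈(y + 1 - p) / D⌉) D
    have hlast : ⌈(y + 1 - D) / D⌉ = ⌈(y + 1) / D⌉ - 1 := by
      rw [sub_div, div_self hD'.ne', Int.ceil_sub_one]
    simp only [Nat.cast_add, Nat.cast_one, Nat.cast_zero, sub_zero, add_sub_add_right_eq_sub,
      sum_sub_distrib, hlast] at h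
    linarith
  have periodic : Function.Periodic (fun y : K => ∑ p ∈ range D, ⌈(y - p) / D⌉ - ⌈y⌉) 1 := by
    intro y
    simp only [telescope, Int.ceil_add_one, add_sub_add_right_eq_sub]
  have hlt : -1 < x - ⌈x⌉ := by linarith [Int.ceil_lt_add_one x]
  have hle : x - ⌈x⌉ ≤ 0 := sub_nonpos.2 (Int.le_ceil x)
  have summand_eq_zero (p : ℕ) (hp : p ∈ range D) : ⌈(x - ⌈x⌉ - p) / D⌉ = 0 := by
    have hp' : (p : K) + 1 ≤ D := by exact_mod_cast mem_range.1 hp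
    rw [Int.ceil_eq_zero_iff, Set.mem_Ioc, lt_div_iff₀ hD', div_le_iff₀ hD']
    constructor <;> linarith [p.cast_nonneg (α := K)]
  have h := periodic.sub_int_mul_eq (x := x) ⌈x⌉
  simp only [mul_one, sum_eq_zero summand_eq_zero, Int.ceil_sub_intCast, sub_self] at h
  linarith

lemma mul_sub_div_sub_mul_sub_div_le {K : Type*} [Field K] [LinearOrder K] [IsStrictOrderedRing K]
    {x y : K} (hy : 0 < y) (hyx : y ≤ x) (a m : K) :
    a * (m - a) / y - a * (m - a) / x ≤ a * m * (1 / y - 1 / x) := by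
  have h : 0 ≤ a ^ 2 * (1 / y - 1 / x) :=
    mul_nonneg (sq_nonneg a) (sub_nonneg.2 (one_div_le_one_div_of_le hy hyx))
  linear_combination h

section Conditions

variable {C D mh mv : ℕ}

lemma one_le_add_one_sub_two_mul (hCD : 2 * D ≤ C) : (1 : ℚ) ≤ C + 1 - 2 * D := by
  have : (2 : ℚ) * D ≤ C := by exact_mod_cast hCD
  linarith

lemma sum_polyLen (hD : 0 < D) (m : ℕ) : ∑ p ∈ range D, polyLen D m p = m := by
  simpa only [polyLen, Int.ceil_natCast] using sum_ceil_sub_div hD (m : ℚ)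

lemma sum_polyLen_sub_one_div (hD : 0 < D) (m : ℕ) (k : ℚ) :
    ∑ p ∈ range D, ((polyLen D m p : ℚ) - 1) / k = ((m : ℚ) - D) / k := by
  rw [← sum_div, sum_sub_distrib, ← Int.cast_sum, sum_polyLen hD, sum_const, card_range,
    nsmul_one, Int.cast_natCast]

lemma SuffLenCond.necLenCond (h : SuffLenCond C D mh mv) : NecLenCond C D mh mv :=
  ⟨h.1, (sum_le_sum fun _ _ => Int.floor_le_ceil _).trans h.2⟩

lemma suffLenCond_of_mul_le (hD : 0 < D) (hCD : 2 * D ≤ C) (hmv : D ≤ mv)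
    (h : (D : ℚ) * (mh - D) ≤ (mv - D) * (C + 1 - 2 * D)) : SuffLenCond C D mh mv := by
  have hk : 1 ≤ mv / D := (Nat.one_le_div_iff hD).2 hmv
  refine ⟨hk, Int.lt_add_one_iff.1 ?_⟩
  have mv_lt : (mv : ℚ) < (mv / D : ℕ) * D + D := by exact_mod_cast Nat.lt_div_mul_add hD
  generalize mv / D = k at hk mv_lt ⊢
  have hk' : (0 : ℚ) < k := by exact_mod_cast hk
  have hD' : (0 : ℚ) < D := by exact_mod_cast hD
  have hE : (0 : ℚ) < C + 1 - 2 * D := zero_lt_one.trans_le (one_le_add_one_sub_two_mul hCD)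
  have quotient_lt : ((mh : ℚ) - D) / k < C + 1 - 2 * D := by
    rw [div_lt_iff₀ hk']
    refine lt_of_mul_lt_mul_left ?_ hD'.le
    calc (D : ℚ) * (mh - D) ≤ (mv - D) * (C + 1 - 2 * D) := h
      _ < (k * D) * (C + 1 - 2 * D) := by gcongr; linarith
      _ = D * ((C + 1 - 2 * D) * k) := by ring
  have sum_lt : (∑ p ∈ range D, (⌈((polyLen D mh p : ℚ) - 1) / k⌉ : ℚ)) < C - D + 1 :=
    calc (∑ p ∈ range D, (⌈((polyLen D mh p : ℚ) - 1) / k⌉ : ℚ))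
        ≤ ∑ p ∈ range D, (((polyLen D mh p : ℚ) - 1) / k + 1) :=
          sum_le_sum fun _ _ => (Int.ceil_lt_add_one _).le
      _ = (mh - D) / k + D := by
          rw [sum_add_distrib, sum_polyLen_sub_one_div hD, sum_const, card_range, nsmul_one]
      _ < C - D + 1 := by linarith
  exact_mod_cast sum_lt

lemma NecLenCond.mul_le (hD : 0 < D) (h : NecLenCond C D mh mv) :
    (D : ℚ) * (mh - D) ≤ mv * C := by
  obtain ⟨hk, hsum⟩ := h
  have div_mul_le : ((mv / D : ℕ) : ℚ) * D ≤ mv := by exact_mod_cast Nat.div_mul_le_self mv D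
  generalize mv / D = k at hk hsum div_mul_le
  have hk' : (0 : ℚ) < k := by exact_mod_cast hk
  have quotient_sub_le : ((mh : ℚ) - D) / k - D ≤ C - D :=
    calc ((mh : ℚ) - D) / k - D = ∑ p ∈ range D, (((polyLen D mh p : ℚ) - 1) / k - 1) := by
          rw [sum_sub_distrib, sum_polyLen_sub_one_div hD, sum_const, card_range, nsmul_one]
      _ ≤ ∑ p ∈ range D, (⌊((polyLen D mh p : ℚ) - 1) / k⌋ : ℚ) :=
          sum_le_sum fun _ _ => (Int.sub_one_lt_floor _).le
      _ ≤ C - D := by exact_mod_cast hsum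
  have hquot : (mh : ℚ) - D ≤ C * k := (div_le_iff₀ hk').1 (by linarith)
  calc (D : ℚ) * (mh - D) ≤ D * (C * k) := by gcongr
    _ = (k * D) * C := by ring
    _ ≤ mv * C := by gcongr

end Conditions

section Lengths

variable {C D mh : ℕ}

lemma exists_suffLenCond (hD : 0 < D) (hCD : 2 * D ≤ C) (mh : ℕ) :
    ∃ mv, SuffLenCond C D mh mv := by
  refine ⟨D + D * mh, suffLenCond_of_mul_le hD hCD (Nat.le_add_right _ _) ?_⟩
  calc (D : ℚ) * (mh - D) ≤ D * mh := by gcongr; exact sub_le_self _ D.cast_nonneg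
    _ ≤ D * mh * (C + 1 - 2 * D) :=
        le_mul_of_one_le_right (by positivity) (one_le_add_one_sub_two_mul hCD)
    _ = ((D + D * mh : ℕ) - D) * (C + 1 - 2 * D) := by push_cast; ring

lemma mvL_le_mvN (hD : 0 < D) (hCD : 2 * D ≤ C) (mh : ℕ) : mvL C D mh ≤ mvN C D mh := by
  obtain ⟨mv, hmv⟩ := exists_suffLenCond hD hCD mh
  have hN : NecLenCond C D mh (mvN C D mh) :=
    Nat.sInf_mem (s := {mv | NecLenCond C D mh mv}) ⟨mv, hmv.necLenCond⟩
  have hC : (0 : ℚ) < C := by exact_mod_cast (by lia : 0 < C)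
  rw [mvL, Int.ceil_le, div_le_iff₀ hC]
  exact hN.mul_le hD

lemma mvS_le_mvU (hD : 0 < D) (hCD : 2 * D ≤ C) (hmh : D ≤ mh) : mvS C D mh ≤ mvU C D mh := by
  have hE : (0 : ℚ) < C + 1 - 2 * D := zero_lt_one.trans_le (one_le_add_one_sub_two_mul hCD)
  have hmh' : (0 : ℚ) ≤ mh - D := sub_nonneg.2 (by exact_mod_cast hmh)
  obtain ⟨c, hc⟩ := Int.eq_ofNat_of_zero_le
    (Int.ceil_nonneg (show 0 ≤ (D : ℚ) * (mh - D) / (C + 1 - 2 * D) by positivity))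
  have hle : (D : ℚ) * (mh - D) ≤ c * (C + 1 - 2 * D) := by
    rw [← div_le_iff₀ hE]
    exact_mod_cast Int.ceil_le.1 hc.le
  have hsuff : SuffLenCond C D mh (D + c) := by
    refine suffLenCond_of_mul_le hD hCD (Nat.le_add_right D c) ?_
    rwa [Nat.cast_add, add_sub_cancel_left]
  rw [mvU, hc]
  exact_mod_cast Nat.sInf_le hsuff

lemma mvU_sub_mvL_lt (hD : 0 < D) (hCD : 2 * D ≤ C) (mh : ℕ) :
    (mvU C D mh : ℚ) - mvL C D mh
      < D + 1 + 2 * mh / ((C : ℚ) / D * (C / (D - 1 / 2) - 2)) := by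
  have hD' : (1 : ℚ) ≤ D := by exact_mod_cast hD
  have hCD' : (2 : ℚ) * D ≤ C := by exact_mod_cast hCD
  have hU := Int.ceil_lt_add_one ((D : ℚ) * (mh - D) / (C + 1 - 2 * D))
  have hL := Int.le_ceil ((D : ℚ) * (mh - D) / C)
  have hdiff := mul_sub_div_sub_mul_sub_div_le (x := (C : ℚ)) (y := C + 1 - 2 * D)
    (by linarith) (by linarith) D mh
  have hbound : (D : ℚ) * mh * (1 / (C + 1 - 2 * D) - 1 / C)
      = 2 * mh / ((C : ℚ) / D * (C / (D - 1 / 2) - 2)) := by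
    have hC_ne : (C : ℚ) ≠ 0 := by linarith
    have hD_ne : (2 * D - 1 : ℚ) ≠ 0 := by linarith
    have hE_ne : (C + 1 - 2 * D : ℚ) ≠ 0 := by linarith
    have hfactor : (C : ℚ) / (D - 1 / 2) - 2 = 2 * (C + 1 - 2 * D) / (2 * D - 1) := by
      rw [show (D : ℚ) - 1 / 2 = (2 * D - 1) / 2 by ring]
      field_simp
      ring
    rw [hfactor]
    generalize hE : (C + 1 - 2 * D : ℚ) = E at hE_ne
    field_simp
    linear_combination (mh : ℚ) * hE
  rw [mvU, mvL]
  push_cast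
  linarith

lemma mvU_sub_mvC_lt (hD : 2 ≤ D) (hCD : 2 * D ≤ C) (mh : ℕ) :
    (mvU C D mh : ℚ) - mvC C D mh
      < D + 1 + mh / (((C : ℚ) / D - 1) * ((C - 1) / (D - 1) - 2)) := by
  have hD' : (2 : ℚ) ≤ D := by exact_mod_cast hD
  have hCD' : (2 : ℚ) * D ≤ C := by exact_mod_cast hCD
  have hU := Int.ceil_lt_add_one ((D : ℚ) * (mh - D) / (C + 1 - 2 * D))
  have hC : (D : ℚ) * (mh - D) / (C - D) ≤ D * ⌈((mh : ℚ) - D) / (C - D)⌉ := by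
    rw [mul_div_assoc]
    gcongr
    exact Int.le_ceil _
  have hdiff := mul_sub_div_sub_mul_sub_div_le (x := (C : ℚ) - D) (y := C + 1 - 2 * D)
    (by linarith) (by linarith) D mh
  have hbound : (D : ℚ) * mh * (1 / (C + 1 - 2 * D) - 1 / (C - D))
      = mh / (((C : ℚ) / D - 1) * ((C - 1) / (D - 1) - 2)) := by
    have hCD_ne : (C - D : ℚ) ≠ 0 := by linarith
    have hD_ne : (D - 1 : ℚ) ≠ 0 := by linarith
    have hE_ne : (C + 1 - 2 * D : ℚ) ≠ 0 := by linarith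
    have hfactor : ((C : ℚ) - 1) / (D - 1) - 2 = (C + 1 - 2 * D) / (D - 1) := by
      field_simp
      ring
    rw [hfactor]
    generalize hE : (C + 1 - 2 * D : ℚ) = E at hE_ne
    field_simp
    linear_combination (mh : ℚ) * hE
  rw [mvU, mvC]
  push_cast
  linarith

lemma mvC_sub_mvL_lt (hD : 0 < D) (hCD : D < C) (mh : ℕ) :
    (mvC C D mh : ℚ) - mvL C D mh < D + 1 + mh / ((C : ℚ) / D * (C / D - 1)) := by
  have hD' : (0 : ℚ) < D := by exact_mod_cast hD
  have hCD' : (D : ℚ) < C := by exact_mod_cast hCD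
  have hC : D * (⌈((mh : ℚ) - D) / (C - D)⌉ : ℚ) < D * (mh - D) / (C - D) + D :=
    calc D * (⌈((mh : ℚ) - D) / (C - D)⌉ : ℚ) < D * ((mh - D) / (C - D) + 1) := by
          gcongr
          exact Int.ceil_lt_add_one _
      _ = D * (mh - D) / (C - D) + D := by ring
  have hL := Int.le_ceil ((D : ℚ) * (mh - D) / C)
  have hdiff := mul_sub_div_sub_mul_sub_div_le (x := (C : ℚ)) (y := C - D)
    (by linarith) (by linarith) D mh
  have hbound : (D : ℚ) * mh * (1 / (C - D) - 1 / C) = mh / ((C : ℚ) / D * (C / D - 1)) := by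
    have hCD_ne : (C - D : ℚ) ≠ 0 := by linarith
    have hC_ne : (C : ℚ) ≠ 0 := by linarith
    field_simp
    ring
  rw [mvC, mvL]
  push_cast
  linarith

lemma mvS_sub_mvN_lt (hD : 0 < D) (hCD : 2 * D ≤ C) (hmh : D ≤ mh) :
    (mvS C D mh : ℚ) - mvN C D mh
      < D + 1 + 2 * mh / ((C : ℚ) / D * (C / (D - 1 / 2) - 2)) := by
  have hS : (mvS C D mh : ℚ) ≤ mvU C D mh := by exact_mod_cast mvS_le_mvU hD hCD hmh
  have hN : (mvL C D mh : ℚ) ≤ mvN C D mh := by exact_mod_cast mvL_le_mvN hD hCD mh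
  exact (sub_le_sub hS hN).trans_lt (mvU_sub_mvL_lt hD hCD mh)

end Lengths

/-- Corollary 1 (gap bounds): for `D ≥ 2`, `C ≥ 2D`, `m_h > D`,
(i) `m_v^S - m_v^N < D + 1 + 2m_h/((C/D)(C/(D-1/2) - 2))`,
(ii) `m_v^U - m_v^C < D + 1 + m_h/((C/D - 1)((C-1)/(D-1) - 2))`,
(iii) `m_v^C - m_v^L < D + 1 + m_h/((C/D)(C/D - 1))`. -/
theorem gap_bounds (C D mh : ℕ) (hD : 2 ≤ D) (hCD : 2 * D ≤ C) (hmh : D < mh) :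
    ((mvS C D mh : ℝ) - (mvN C D mh : ℝ)
        < (D : ℝ) + 1 + 2 * (mh : ℝ) / (((C : ℝ) / D) * ((C : ℝ) / ((D : ℝ) - 1/2) - 2))) ∧
    (((mvU C D mh : ℤ) : ℝ) - ((mvC C D mh : ℤ) : ℝ)
        < (D : ℝ) + 1
          + (mh : ℝ) / (((C : ℝ) / D - 1) * (((C : ℝ) - 1) / ((D : ℝ) - 1) - 2))) ∧
    (((mvC C D mh : ℤ) : ℝ) - ((mvL C D mh : ℤ) : ℝ)
        < (D : ℝ) + 1 + (mh : ℝ) / (((C : ℝ) / D) * ((C : ℝ) / D - 1))) := by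
  have hD₀ : 0 < D := by lia
  have hS := (Rat.cast_lt (K := ℝ)).2 (mvS_sub_mvN_lt hD₀ hCD hmh.le)
  have hU := (Rat.cast_lt (K := ℝ)).2 (mvU_sub_mvC_lt hD hCD mh)
  have hC := (Rat.cast_lt (K := ℝ)).2 (mvC_sub_mvL_lt hD₀ (by lia : D < C) mh)
  push_cast at hS hU hC
  exact ⟨hS, hU, hC⟩
end
end

section
/- (Upper bound on the sufficient-length sum, equation (28).) Let C, D, m_h, m_v be positive integers with m_h ≥ D and m_v > D. Then, as an inequality of real numbers, ∑_{p=0}^{D−1} ⌈(⌈(m_h − p)/D⌉ − 1)/⌊m_v/D⌋⌉ < D + (m_h − D)/⌊m_v/D⌋ < D + D·(m_h − D)/(m_v − D) whenever m_h > D, and the first strict inequality holds (with the convention that the middle and right terms are real numbers) for all m_h ≥ D. -/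
open Finset

/-!
By Hermite's identity the polyphase lengths add up to `m_h`. Each ceiling exceeds its argument by
less than `1`, so summing over the `D` phases gives the first inequality. The second one is
`⌊m_v / D⌋ > m_v / D - 1`.
-/

section OrderedRing

variable {R : Type*} [Ring R]

theorem sum_ceil_lt_sum_add_card [LinearOrder R] [IsStrictOrderedRing R] [FloorRing R]
    {ι : Type*} {s : Finset ι} (hs : s.Nonempty) (f : ι → R) :
    ((∑ i ∈ s, ⌈f i⌉ : ℤ) : R) < ∑ i ∈ s, f i + #s := by
  calc ((∑ i ∈ s, ⌈f i⌉ : ℤ) : R) = ∑ i ∈ s, (⌈f i⌉ : R) := Int.cast_sum ..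
    _ < ∑ i ∈ s, (f i + 1) := sum_lt_sum_of_nonempty hs fun i _ ↦ Int.ceil_lt_add_one (f i)
    _ = ∑ i ∈ s, f i + #s := by rw [sum_add_distrib, sum_const, nsmul_one]

theorem cast_sub_lt_mul_cast_div [PartialOrder R] [IsStrictOrderedRing R] (m : ℕ) {d : ℕ}
    (hd : 0 < d) : (m : R) - d < d * (m / d : ℕ) := by
  rw [sub_lt_iff_lt_add, ← mul_add_one]
  exact_mod_cast Nat.lt_mul_div_succ m hd

end OrderedRing

section Hermite

variable {K : Type*} [Field K] [LinearOrder K] [IsStrictOrderedRing K] [FloorRing K]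

theorem sum_range_ceil_add_one_sub_div {n : ℕ} (hn : 0 < n) (x : K) :
    ∑ p ∈ range n, ⌈(x + 1 - p) / n⌉ = ∑ p ∈ range n, ⌈(x - p) / n⌉ + 1 := by
  have hn₀ : (n : K) ≠ 0 := Nat.cast_ne_zero.mpr hn.ne'
  have wrap : ⌈(x + 1 - n) / n⌉ = ⌈(x + 1) / n⌉ - 1 := by
    rw [sub_div, div_self hn₀, Int.ceil_sub_one]
  have shift (p : ℕ) : ⌈(x + 1 - (p + 1 : ℕ)) / n⌉ = ⌈(x - p) / n⌉ := by
    rw [Nat.cast_succ, add_sub_add_right_eq_sub]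
  have telescope := (sum_range_succ (fun p : ℕ ↦ ⌈(x + 1 - p) / n⌉) n).symm.trans
    (sum_range_succ' _ n)
  simp only [shift, wrap, Nat.cast_zero, sub_zero] at telescope
  linarith

theorem sum_range_ceil_sub_div_eq_zero {n : ℕ} {x : K} (hx : -1 < x) (hx₀ : x ≤ 0) :
    ∑ p ∈ range n, ⌈(x - p) / n⌉ = 0 := by
  refine sum_eq_zero fun p hp ↦ Int.ceil_eq_zero_iff.mpr ⟨?_, ?_⟩
  · have hpn : (p : K) + 1 ≤ n := mod_cast mem_range.mp hp
    rw [lt_div_iff₀ (by linarith [p.cast_nonneg (α := K)])]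
    linarith
  · exact div_nonpos_of_nonpos_of_nonneg (by linarith [p.cast_nonneg (α := K)]) n.cast_nonneg

/-- **Hermite's identity** for ceilings: both sides grow by `1` under `x ↦ x + 1`, and both vanish
on `(-1, 0]`. -/
theorem sum_range_ceil_sub_div {n : ℕ} (hn : 0 < n) (x : K) :
    ∑ p ∈ range n, ⌈(x - p) / n⌉ = ⌈x⌉ := by
  have periodic : Function.Periodic (fun y : K ↦ ∑ p ∈ range n, ⌈(y - p) / n⌉ - ⌈y⌉) 1 := by
    intro y
    simp only [sum_range_ceil_add_one_sub_div hn, Int.ceil_add_one, add_sub_add_right_eq_sub]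
  have reduce := periodic.sub_zsmul_eq ⌈x⌉ (x := x)
  have base := sum_range_ceil_sub_div_eq_zero (n := n) (x := x - ⌈x⌉)
    (by linarith [Int.ceil_lt_add_one x]) (sub_nonpos.mpr (Int.le_ceil x))
  simp only [zsmul_one, base, Int.ceil_sub_intCast, sub_self] at reduce
  exact sub_eq_zero.mp reduce.symm

end Hermite

theorem sum_range_polyLen {D : ℕ} (hD : 0 < D) (m : ℕ) :
    ∑ p ∈ range D, polyLen D m p = m := by
  simpa only [polyLen, Int.ceil_natCast] using sum_range_ceil_sub_div hD (m : ℚ)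

theorem sum_ceil_polyLen_sub_one_div_lt {D : ℕ} (hD : 0 < D) (m : ℕ) (k : ℚ) :
    ((∑ p ∈ range D, ⌈((polyLen D m p : ℚ) - 1) / k⌉ : ℤ) : ℚ) < D + ((m : ℚ) - D) / k := by
  have sum_len : ∑ p ∈ range D, (polyLen D m p : ℚ) = m := mod_cast sum_range_polyLen hD m
  calc ((∑ p ∈ range D, ⌈((polyLen D m p : ℚ) - 1) / k⌉ : ℤ) : ℚ)
      < ∑ p ∈ range D, ((polyLen D m p : ℚ) - 1) / k + #(range D) :=
        sum_ceil_lt_sum_add_card (nonempty_range_iff.mpr hD.ne') _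
    _ = D + ((m : ℚ) - D) / k := by
        rw [← sum_div, sum_sub_distrib, sum_len, sum_const, nsmul_one, card_range, add_comm]

theorem div_cast_div_lt_mul_div_sub {K : Type*} [Field K] [LinearOrder K] [IsStrictOrderedRing K]
    {m d : ℕ} (hd : 0 < d) (hdm : d < m) {a : K} (ha : 0 < a) :
    a / (m / d : ℕ) < d * a / (m - d) := by
  have quot_pos : (0 : K) < (m / d : ℕ) := mod_cast Nat.div_pos hdm.le hd
  have diff_pos : (0 : K) < m - d := sub_pos.mpr (mod_cast hdm)
  rw [div_lt_div_iff₀ quot_pos diff_pos]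
  calc a * (m - d) < a * (d * (m / d : ℕ)) := by gcongr; exact cast_sub_lt_mul_cast_div m hd
    _ = d * a * (m / d : ℕ) := by ring

theorem suff_sum_upper_bound_general {D mv : ℕ} (hD : 0 < D) (hmv : D < mv) (mh : ℕ) :
    (((∑ p ∈ Finset.range D, ⌈((polyLen D mh p : ℚ) - 1) / ((mv / D : ℕ) : ℚ)⌉ : ℤ) : ℝ)
        < (D : ℝ) + ((mh : ℝ) - (D : ℝ)) / ((mv / D : ℕ) : ℝ)) ∧
    (D < mh →
      (D : ℝ) + ((mh : ℝ) - (D : ℝ)) / ((mv / D : ℕ) : ℝ)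
        < (D : ℝ) + (D : ℝ) * ((mh : ℝ) - (D : ℝ)) / ((mv : ℝ) - (D : ℝ))) := by
  refine ⟨?_, fun hmh ↦ ?_⟩
  · have rat_bound := sum_ceil_polyLen_sub_one_div_lt hD mh (mv / D : ℕ)
    simpa only [Rat.cast_add, Rat.cast_div, Rat.cast_sub, Rat.cast_natCast, Rat.cast_intCast]
      using (Rat.cast_lt (K := ℝ)).mpr rat_bound
  · gcongr ?_ + ?_
    exact div_cast_div_lt_mul_div_sub hD hmv (sub_pos.mpr (mod_cast hmh))

/-- Upper bound on the sufficient-length sum (equation (28)): for `m_h ≥ D` and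
`m_v > D`, `∑_{p=0}^{D-1} ⌈(m_{h;p} - 1)/⌊m_v/D⌋⌉ < D + (m_h - D)/⌊m_v/D⌋`, and
if moreover `m_h > D` then also
`D + (m_h - D)/⌊m_v/D⌋ < D + D·(m_h - D)/(m_v - D)`. -/
theorem suff_sum_upper_bound (C D mh mv : ℕ) (hC : 0 < C) (hD : 0 < D)
    (hmh : D ≤ mh) (hmv : D < mv) :
    (((∑ p ∈ Finset.range D, ⌈((polyLen D mh p : ℚ) - 1) / ((mv / D : ℕ) : ℚ)⌉ : ℤ) : ℝ)
        < (D : ℝ) + ((mh : ℝ) - (D : ℝ)) / ((mv / D : ℕ) : ℝ)) ∧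
    (D < mh →
      (D : ℝ) + ((mh : ℝ) - (D : ℝ)) / ((mv / D : ℕ) : ℝ)
        < (D : ℝ) + (D : ℝ) * ((mh : ℝ) - (D : ℝ)) / ((mv : ℝ) - (D : ℝ))) := by
  exact suff_sum_upper_bound_general hD hmv mh
end
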